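/- Let k ∈ (0,1). For every n ∈ ℕ, Kuznetsov's moment integrals satisfy Σ_{j=0}^{n} (n − 3j) C(2n+3, 2j+1) I_j^+ I_{n−j}^− = 0, where C(a,b) denotes the binomial coefficient. -/

import Mathlib

/-!
Write `a = K`, `b = K'`, `α = (b + ia)/2`, `β = (b - ia)/2`. The substitution `x = t²` and the
factorization `2 (cosh bt ∓ cos at) = (e^{αt} ∓ e^{-αt}) (e^{βt} ∓ e^{-βt})` allow the integrands to be
expanded into geometric series. Integrating termwise, the two integrals in `I^±_j` together give a
sum of `± p! / ((2n+1)α + (2m+1)β)^{p+1}` over `n ≥ 0` and all `m ∈ ℤ` (`hasSum_moments`).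

Lipschitz's formula in `m`, followed by an exchange of summations (`tsum_swap`), turns this into a
Lambert series in `y = exp(πiα/(2β))`, `0 < |y| < 1`. In `exists_moment_form`, with `κ = -πi/(2β)`,
* `I^+_j = 2i κ^{2j+2} A_{2j+1}`, where `A_i = ∑_{r odd} c_r r^i` with
  `c_{2s+1} = (-1)^s / (y^{2s+1} + y^{-2s-1})` (`oddMoment`);
* `I^-_m = 8 κ^{2m+4} B_{2m+2}`, where `B_l = ∑_i C(l,i) A_i A_{l-i}` (`convMoment`).

The second formula rests on the fact that the self-convolution of `c` is again explicit: partial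
fractions make `∑_s c_{2s+1} c_{2(N-1-s)+1}` telescope (`hasSum_conv`), and the resulting coefficients
are those in the Lambert series for `I^-` (`hasSum_evenCoeff`, `convMoment_even`). Classically, `sd²`
has an explicit Fourier series.

If `F` is the exponential generating function of `A`, that of `B` is `F²`, and the identity
`F (F²)' = 2 F' F²` reads `∑_i (r - 3i) C(r,i) A_i B_{r-i} = 0` (`convMoment_identity`). For
`r = 2n + 3` only the odd `i = 2j + 1` with `j ≤ n` contribute, since `A_i = 0` for even `i`, so that
`B_0 = A_0² = 0`; there `r - 3i = 2(n - 3j)`.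
-/

open MeasureTheory Real

/-- The complete elliptic integral of the first kind `K(k)`. -/
noncomputable def ellipticK (k : ℝ) : ℝ :=
  ∫ θ in (0 : ℝ)..(π / 2), (1 - k ^ 2 * Real.sin θ ^ 2) ^ (-(1 / 2) : ℝ)

/-- Kuznetsov's moment integral `I_n^+`, realizing
`(1/2)∫_ℝ x^n dx/(cos(√x K) + cosh(√x K'))` with `√x = i√(−x)` for `x < 0`. -/
noncomputable def Iplus (k : ℝ) (n : ℕ) : ℝ :=
  (1 / 2) * (∫ x in Set.Ioi (0 : ℝ), x ^ n /
      (Real.cos (ellipticK k * Real.sqrt x) +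
        Real.cosh (ellipticK (Real.sqrt (1 - k ^ 2)) * Real.sqrt x)))
  + ((-1 : ℝ) ^ n / 2) * (∫ x in Set.Ioi (0 : ℝ), x ^ n /
      (Real.cosh (ellipticK k * Real.sqrt x) +
        Real.cos (ellipticK (Real.sqrt (1 - k ^ 2)) * Real.sqrt x)))

/-- Kuznetsov's moment integral `I_n^−`, realizing
`∫_ℝ x^{n+1} dx/(cos(√x K) − cosh(√x K'))` with `√x = i√(−x)` for `x < 0`. -/
noncomputable def Iminus (k : ℝ) (n : ℕ) : ℝ :=
  (∫ x in Set.Ioi (0 : ℝ), x ^ (n + 1) /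
      (Real.cos (ellipticK k * Real.sqrt x) -
        Real.cosh (ellipticK (Real.sqrt (1 - k ^ 2)) * Real.sqrt x)))
  + (-1 : ℝ) ^ (n + 1) * (∫ x in Set.Ioi (0 : ℝ), x ^ (n + 1) /
      (Real.cosh (ellipticK k * Real.sqrt x) -
        Real.cos (ellipticK (Real.sqrt (1 - k ^ 2)) * Real.sqrt x)))

/-! ### Gamma integrals -/

lemma integrableOn_pow_mul_exp (p : ℕ) {c : ℝ} (hc : 0 < c) :
    IntegrableOn (fun t : ℝ => t ^ p * Real.exp (-(c * t))) (Set.Ioi 0) := by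
  have h := integrableOn_rpow_mul_exp_neg_mul_rpow (p := 1) (s := p) (b := c)
    (by have : (0 : ℝ) ≤ p := p.cast_nonneg
        linarith) one_pos hc
  refine h.congr_fun (fun x _ => ?_) measurableSet_Ioi
  simp

lemma integral_pow_mul_exp (p : ℕ) {c : ℝ} (hc : 0 < c) :
    ∫ t in Set.Ioi (0 : ℝ), t ^ p * Real.exp (-(c * t)) = p.factorial / c ^ (p + 1) := by
  have h := Real.integral_rpow_mul_exp_neg_mul_Ioi (a := p + 1) (r := c) (by positivity) hc
  simp only [add_sub_cancel_right, Real.rpow_natCast] at h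
  rw [h, Real.Gamma_nat_eq_factorial]
  have : (1 / c) ^ ((p : ℝ) + 1) = 1 / c ^ (p + 1) := by
    rw [show (p : ℝ) + 1 = ((p + 1 : ℕ) : ℝ) by push_cast; ring, Real.rpow_natCast, one_div_pow]
  rw [this]; ring

lemma norm_pow_mul_cexp (p : ℕ) (c : ℂ) {t : ℝ} (ht : 0 < t) :
    ‖(t : ℂ) ^ p * Complex.exp (-(c * t))‖ = t ^ p * Real.exp (-(c.re * t)) := by
  rw [norm_mul, norm_pow, Complex.norm_real, Complex.norm_exp, Real.norm_of_nonneg ht.le]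
  simp

lemma integrableOn_pow_mul_cexp (p : ℕ) {c : ℂ} (hc : 0 < c.re) :
    IntegrableOn (fun t : ℝ => (t : ℂ) ^ p * Complex.exp (-(c * t))) (Set.Ioi 0) := by
  refine Integrable.mono' (integrableOn_pow_mul_exp p hc) ?_ ?_
  · exact (by fun_prop : Continuous fun t : ℝ =>
      (t : ℂ) ^ p * Complex.exp (-(c * t))).aestronglyMeasurable
  · filter_upwards [ae_restrict_mem measurableSet_Ioi] with t ht
    exact (norm_pow_mul_cexp p c ht).le

lemma tendsto_pow_mul_cexp (p : ℕ) {c : ℂ} (hc : 0 < c.re) :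
    Filter.Tendsto (fun t : ℝ => (t : ℂ) ^ p * Complex.exp (-(c * t))) Filter.atTop (nhds 0) := by
  rw [tendsto_zero_iff_norm_tendsto_zero]
  have h := tendsto_rpow_mul_exp_neg_mul_atTop_nhds_zero p c.re hc
  refine h.congr' ?_
  filter_upwards [Filter.eventually_gt_atTop 0] with t ht
  rw [norm_pow_mul_cexp p c ht]
  simp

/-- The Gamma integral `∫₀^∞ t^p e^{-ct} dt = p! / c^{p+1}` for complex `c` with `Re c > 0`, by
induction on `p` through integration by parts. -/
lemma integral_pow_mul_cexp (p : ℕ) {c : ℂ} (hc : 0 < c.re) :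
    ∫ t in Set.Ioi (0 : ℝ), (t : ℂ) ^ p * Complex.exp (-(c * t)) =
      p.factorial / c ^ (p + 1) := by
  have hc0 : c ≠ 0 := by rintro rfl; simp at hc
  have hE : ∀ x : ℝ, HasDerivAt (fun t : ℝ => Complex.exp (-(c * t)))
      (-c * Complex.exp (-(c * x))) x := by
    intro x
    have h1 : HasDerivAt (fun t : ℝ => -(c * (t : ℂ))) (-(c * 1)) x :=
      ((Complex.ofRealCLM.hasDerivAt (x := x)).const_mul c).neg
    convert! h1.cexp using 1
    ring
  induction p with
  | zero =>
    have h := integral_Ioi_of_hasDerivAt_of_tendsto' (a := (0 : ℝ))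
      (fun x _ => hE x)
      (by simpa [IntegrableOn] using (integrableOn_pow_mul_cexp 0 hc).const_mul (-c))
      (by simpa using tendsto_pow_mul_cexp 0 hc)
    rw [integral_const_mul] at h
    simp only [pow_zero, one_mul, zero_add, pow_one, Nat.factorial_zero, Nat.cast_one]
    rw [eq_div_iff hc0]
    simp at h
    linear_combination h
  | succ p ih =>
    have hd : ∀ x : ℝ, HasDerivAt (fun t : ℝ => (t : ℂ) ^ (p + 1) * Complex.exp (-(c * t)))
        (((p + 1 : ℕ) : ℂ) * ((x : ℂ) ^ p * Complex.exp (-(c * x))) +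
          -c * ((x : ℂ) ^ (p + 1) * Complex.exp (-(c * x)))) x := by
      intro x
      have h1 : HasDerivAt (fun t : ℝ => (t : ℂ) ^ (p + 1)) (((p + 1 : ℕ) : ℂ) * (x : ℂ) ^ p) x := by
        simpa using (hasDerivAt_pow (p + 1) (x : ℂ)).comp_ofReal
      convert! h1.mul (hE x) using 1
      ring
    have i1 := (integrableOn_pow_mul_cexp p hc).const_mul ((p + 1 : ℕ) : ℂ)
    have i2 := (integrableOn_pow_mul_cexp (p + 1) hc).const_mul (-c)
    have h := integral_Ioi_of_hasDerivAt_of_tendsto' (a := (0 : ℝ))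
      (fun x _ => hd x) (i1.add i2) (tendsto_pow_mul_cexp (p + 1) hc)
    rw [integral_add i1 i2, integral_const_mul, integral_const_mul, ih] at h
    rw [eq_div_iff (pow_ne_zero _ hc0), Nat.factorial_succ]
    simp at h
    have h2 : ((p : ℂ) + 1) * (p.factorial / c ^ (p + 1)) * c ^ (p + 1) =
        (p + 1) * p.factorial := by
      field_simp
    push_cast
    linear_combination -c ^ (p + 1) * h + h2

/-! ### Termwise integration of geometric series -/

lemma hasSum_inv_exp_sub {ε β : ℂ} (hε : ‖ε‖ = 1) (hβ : 0 < β.re) {t : ℝ} (ht : 0 < t) :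
    HasSum (fun m : ℕ => ε ^ m * Complex.exp (-((2 * m + 1) * β * t)))
      (Complex.exp (β * t) - ε * Complex.exp (-(β * t)))⁻¹ := by
  have hn : ‖ε * Complex.exp (-(2 * β * t))‖ < 1 := by
    rw [norm_mul, hε, one_mul, Complex.norm_exp, Real.exp_lt_one_iff]
    simp
    positivity
  have h := (hasSum_geometric_of_norm_lt_one hn).mul_left (Complex.exp (-(β * t)))
  convert! h using 1
  · funext m
    rw [mul_pow, ← Complex.exp_nat_mul, mul_left_comm, ← Complex.exp_add]
    congr 2
    ring
  · have h1 : (Complex.exp (β * t) - ε * Complex.exp (-(β * t))) =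
        Complex.exp (β * t) * (1 - ε * Complex.exp (-(2 * β * t))) := by
      rw [mul_sub, mul_one, mul_left_comm, ← Complex.exp_add]
      congr 3
      ring
    rw [h1, mul_inv, ← Complex.exp_neg]

lemma summable_inv_lin_pow {c b : ℝ} (hc : 0 ≤ c) (hb : 0 < b) {q : ℕ} (hq : 2 ≤ q) :
    Summable (fun m : ℕ => 1 / (c + (2 * m + 1) * b) ^ q) := by
  have h1 : Summable (fun m : ℕ => (1 / b ^ q) * (1 / ((m + 1 : ℕ) : ℝ) ^ q)) :=
    ((summable_nat_add_iff 1).2 (Real.summable_one_div_nat_pow.2 hq)).mul_left _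
  refine Summable.of_nonneg_of_le (fun m => by positivity) (fun m => ?_) h1
  rw [one_div_mul_one_div, ← mul_pow]
  have hm : (0 : ℝ) ≤ m := m.cast_nonneg
  refine one_div_le_one_div_of_le (by positivity) (pow_le_pow_left₀ (by positivity) ?_ _)
  push_cast
  nlinarith

lemma hasSum_inner {ε β γ : ℂ} (hε : ‖ε‖ = 1) (hβ : 0 < β.re) (hγ : 0 < γ.re) {p : ℕ}
    (hp : 1 ≤ p) :
    HasSum (fun m : ℕ => ε ^ m * (p.factorial / (γ + (2 * m + 1) * β) ^ (p + 1)))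
      (∫ t in Set.Ioi (0 : ℝ), (t : ℂ) ^ p * (Complex.exp (-(γ * t)) *
        (Complex.exp (β * t) - ε * Complex.exp (-(β * t)))⁻¹)) := by
  have hre : ∀ m : ℕ, (γ + (2 * m + 1) * β).re = γ.re + (2 * m + 1) * β.re := by
    intro m; simp
  have hre0 : ∀ m : ℕ, 0 < (γ + (2 * m + 1) * β).re := by
    intro m; rw [hre]; positivity
  have h := hasSum_integral_of_summable_integral_norm (μ := volume.restrict (Set.Ioi (0 : ℝ)))
    (F := fun (m : ℕ) (t : ℝ) => ε ^ m * ((t : ℂ) ^ p *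
      Complex.exp (-((γ + (2 * m + 1) * β) * t))))
    (fun m => (integrableOn_pow_mul_cexp p (hre0 m)).const_mul _) ?_
  · convert! h using 1
    · funext m
      rw [integral_const_mul, integral_pow_mul_cexp p (hre0 m)]
    · refine setIntegral_congr_fun measurableSet_Ioi fun t ht => ?_
      have h2 := ((hasSum_inv_exp_sub hε hβ ht).mul_left
        ((t : ℂ) ^ p * Complex.exp (-(γ * t)))).tsum_eq
      rw [← mul_assoc, ← h2]
      refine tsum_congr fun m => ?_
      rw [show -((γ + (2 * m + 1) * β) * t) = -(γ * t) + -((2 * m + 1) * β * t) by ring,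
        Complex.exp_add]
      ring
  · have : ∀ m : ℕ, ∫ t in Set.Ioi (0 : ℝ), ‖ε ^ m * ((t : ℂ) ^ p *
        Complex.exp (-((γ + (2 * m + 1) * β) * t)))‖ =
        p.factorial * (1 / (γ.re + (2 * m + 1) * β.re) ^ (p + 1)) := by
      intro m
      rw [← hre, mul_one_div, ← integral_pow_mul_exp p (hre0 m)]
      refine setIntegral_congr_fun measurableSet_Ioi fun t ht => ?_
      rw [norm_mul, norm_pow, hε, one_pow, one_mul, norm_pow_mul_cexp p _ ht]
    simp only [this]
    exact (summable_inv_lin_pow hγ.le hβ (by omega)).mul_left _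

/-- Expanding both factors `(e^{αt} - ε e^{-αt})⁻¹` and `(e^{βt} - ε e^{-βt})⁻¹` into geometric
series and integrating term by term gives an iterated lattice sum. The hypothesis `hC` compensates a
possible pole of the second factor at `t = 0`. -/
lemma hasSum_outer {ε α β : ℂ} (hε : ‖ε‖ = 1) (hα : 0 < α.re) (hβ : 0 < β.re) {p p' : ℕ}
    (hp : 1 ≤ p) (hp' : 1 ≤ p') {C : ℝ} (hC : ∀ t : ℝ, 0 < t →
      t ^ p * ‖(Complex.exp (β * t) - ε * Complex.exp (-(β * t)))⁻¹‖ ≤ C * t ^ p') :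
    HasSum (fun n : ℕ => ε ^ n * ∑' m : ℕ, ε ^ m *
        (p.factorial / ((2 * n + 1) * α + (2 * m + 1) * β) ^ (p + 1)))
      (∫ t in Set.Ioi (0 : ℝ), (t : ℂ) ^ p *
        ((Complex.exp (α * t) - ε * Complex.exp (-(α * t)))⁻¹ *
        (Complex.exp (β * t) - ε * Complex.exp (-(β * t)))⁻¹)) := by
  have hre : ∀ n : ℕ, ((2 * n + 1) * α).re = (2 * n + 1) * α.re := by
    intro m; simp
  have hre0 : ∀ n : ℕ, 0 < ((2 * n + 1) * α).re := by
    intro m; rw [hre]; positivity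
  have hbd : ∀ n : ℕ, ∀ t : ℝ, 0 < t → ‖ε ^ n * ((t : ℂ) ^ p *
      (Complex.exp (-((2 * n + 1) * α * t)) *
        (Complex.exp (β * t) - ε * Complex.exp (-(β * t)))⁻¹))‖ ≤
      C * (t ^ p' * Real.exp (-((2 * n + 1) * α.re * t))) := by
    intro n t ht
    have h1 := norm_pow_mul_cexp p ((2 * n + 1) * α) ht
    rw [norm_mul, norm_pow, hε, one_pow, one_mul, ← mul_assoc, norm_mul, h1, hre]
    have := mul_le_mul_of_nonneg_right (hC t ht) (Real.exp_pos (-((2 * n + 1) * α.re * t))).le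
    linarith
  have hdom : ∀ n : ℕ, IntegrableOn (fun t : ℝ => C * (t ^ p' *
      Real.exp (-((2 * n + 1) * α.re * t)))) (Set.Ioi 0) := fun n => by
    rw [← hre]
    exact (integrableOn_pow_mul_exp p' (hre0 n)).const_mul C
  have hF : ∀ n : ℕ, Integrable (fun t : ℝ => ε ^ n * ((t : ℂ) ^ p *
      (Complex.exp (-((2 * n + 1) * α * t)) *
        (Complex.exp (β * t) - ε * Complex.exp (-(β * t)))⁻¹)))
      (volume.restrict (Set.Ioi (0 : ℝ))) := by
    intro n
    refine Integrable.mono' (hdom n) ?_ ?_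
    · exact (by fun_prop : Measurable fun t : ℝ => ε ^ n * ((t : ℂ) ^ p *
        (Complex.exp (-((2 * n + 1) * α * t)) *
        (Complex.exp (β * t) - ε * Complex.exp (-(β * t)))⁻¹))).aestronglyMeasurable
    · filter_upwards [ae_restrict_mem measurableSet_Ioi] with t ht using hbd n t ht
  have h := hasSum_integral_of_summable_integral_norm hF ?_
  · convert! h using 1
    · funext n
      rw [integral_const_mul, (hasSum_inner hε hβ (hre0 n) hp).tsum_eq]
    · refine setIntegral_congr_fun measurableSet_Ioi fun t ht => ?_
      have h2 := ((hasSum_inv_exp_sub hε hα ht).mul_left ((t : ℂ) ^ p *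
        (Complex.exp (β * t) - ε * Complex.exp (-(β * t)))⁻¹)).tsum_eq
      rw [show ∀ x y z : ℂ, x * (y * z) = x * z * y by intros; ring, ← h2]
      refine tsum_congr fun m => ?_
      ring
  · refine Summable.of_nonneg_of_le (fun n => integral_nonneg fun t => norm_nonneg _)
      (g := fun n : ℕ => _) (f := fun n : ℕ => C * (p'.factorial *
        (1 / (0 + (2 * n + 1) * α.re) ^ (p' + 1)))) (fun n => ?_)
      (((summable_inv_lin_pow le_rfl hα (by omega)).mul_left _).mul_left _)
    rw [zero_add, mul_one_div, ← hre, ← integral_pow_mul_exp p' (hre0 n), ← integral_const_mul,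
      hre]
    exact setIntegral_mono_on (hF n).norm (hdom n) measurableSet_Ioi fun t ht => hbd n t ht

/-! ### The moment integrals as lattice sums -/

lemma norm_exp_sub_exp_ge {ε β : ℂ} (hε : ‖ε‖ = 1) (hβ : 0 < β.re) {t : ℝ} (ht : 0 < t) :
    2 * (β.re * t) ≤ ‖Complex.exp (β * t) - ε * Complex.exp (-(β * t))‖ := by
  have h1 := norm_sub_norm_le (Complex.exp (β * t)) (ε * Complex.exp (-(β * t)))
  rw [norm_mul, hε, one_mul, Complex.norm_exp, Complex.norm_exp] at h1
  have h2 := Real.self_le_sinh_iff.2 (mul_pos hβ ht).le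
  rw [Real.sinh_eq] at h2
  simp at h1
  linarith

lemma bound_one {β : ℂ} (hβ : 0 < β.re) (p : ℕ) (t : ℝ) (ht : 0 < t) :
    t ^ (p + 1) * ‖(Complex.exp (β * t) - 1 * Complex.exp (-(β * t)))⁻¹‖ ≤
      1 / (2 * β.re) * t ^ p := by
  have h1 := norm_exp_sub_exp_ge (ε := 1) (by simp) hβ ht
  rw [norm_inv]
  have h2 := inv_anti₀ (by positivity) h1
  calc _ ≤ t ^ (p + 1) * (2 * (β.re * t))⁻¹ := by gcongr
    _ = _ := by
      rw [pow_succ]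
      field_simp

/-- The function `1 / cosh (βt)` is bounded on `t > 0`: near `0` the real part of `cosh` is bounded
below, and away from `0` the general bound `norm_exp_sub_exp_ge` applies. -/
lemma bound_neg_one {β : ℂ} (hβ : 0 < β.re) : ∃ C : ℝ, ∀ (p : ℕ) (t : ℝ), 0 < t →
    t ^ p * ‖(Complex.exp (β * t) - (-1) * Complex.exp (-(β * t)))⁻¹‖ ≤ C * t ^ p := by
  have hδ : 0 < min 1 (2 * (β.re / (|β.im| + 1))) := by positivity
  refine ⟨(min 1 (2 * (β.re / (|β.im| + 1))))⁻¹, fun p t ht => ?_⟩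
  rw [norm_inv, mul_comm]
  gcongr
  rcases le_or_gt (|β.im| * t) 1 with h | h
  · refine (min_le_left _ _).trans ?_
    refine le_trans ?_ (Complex.abs_re_le_norm _)
    refine le_trans ?_ (le_abs_self _)
    have hre : (Complex.exp (β * t) - (-1) * Complex.exp (-(β * t))).re =
        (Real.exp (β.re * t) + Real.exp (-(β.re * t))) * Real.cos (β.im * t) := by
      simp [Complex.exp_re]
      ring
    rw [hre]
    have h1 : 1 / 2 ≤ Real.cos (β.im * t) := by
      have h2 := Real.one_sub_sq_div_two_le_cos (x := β.im * t)
      have h3 : (β.im * t) ^ 2 ≤ 1 := by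
        rw [← sq_abs, abs_mul, abs_of_pos ht]
        exact pow_le_one₀ (by positivity) h
      linarith
    have h4 := Real.one_le_cosh (β.re * t)
    rw [Real.cosh_eq] at h4
    nlinarith
  · refine (min_le_right _ _).trans ?_
    refine le_trans ?_ (norm_exp_sub_exp_ge (ε := -1) (by simp) hβ ht)
    have : 1 / (|β.im| + 1) ≤ t := by
      rw [div_le_iff₀ (by positivity)]
      nlinarith
    rw [div_eq_mul_one_div]
    gcongr

/-- The denominators of the moment integrals factor: with `α, β = (b ± ia)/2`,
`2 (cosh bt - ε cos at) = (e^{αt} - ε e^{-αt}) (e^{βt} - ε e^{-βt})`. -/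
lemma exp_prod_eq (ε : ℝ) (hε : ε = 1 ∨ ε = -1) (a b t : ℝ) {α β : ℂ} (h1 : α + β = b)
    (h2 : α - β = a * Complex.I ∨ α - β = -(a * Complex.I)) :
    (Complex.exp (α * t) - ε * Complex.exp (-(α * t))) *
      (Complex.exp (β * t) - ε * Complex.exp (-(β * t))) =
      2 * ((Real.cosh (b * t) - ε * Real.cos (a * t) : ℝ) : ℂ) := by
  have e1 : Complex.exp (b * t) = Complex.exp (α * t) * Complex.exp (β * t) := by
    rw [← Complex.exp_add, ← h1]; ring_nf
  have e2 : Complex.exp (-(b * t)) = Complex.exp (-(α * t)) * Complex.exp (-(β * t)) := by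
    rw [← Complex.exp_add, ← h1]; ring_nf
  have e3 : Complex.exp (a * t * Complex.I) + Complex.exp (-(a * t) * Complex.I) =
      Complex.exp (α * t) * Complex.exp (-(β * t)) +
      Complex.exp (-(α * t)) * Complex.exp (β * t) := by
    rw [← Complex.exp_add, ← Complex.exp_add,
      show α * t + -(β * t) = (α - β) * t by ring, show -(α * t) + β * t = -((α - β) * t) by ring]
    rcases h2 with h2 | h2 <;> rw [h2]
    · ring_nf
    · rw [add_comm]; ring_nf
  have hε2 : (ε : ℂ) ^ 2 = 1 := by rcases hε with h | h <;> simp [h]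
  push_cast
  rw [Complex.cosh, Complex.cos, e1, e2, e3]
  linear_combination (Complex.exp (-(α * t)) * Complex.exp (-(β * t))) * hε2

/-- A moment integral in the variable `t = √x`, with its denominator factored. -/
lemma moment_eq (ε : ℝ) (hε : ε = 1 ∨ ε = -1) (a b : ℝ) {α β : ℂ} (h1 : α + β = b)
    (h2 : α - β = a * Complex.I ∨ α - β = -(a * Complex.I)) (j : ℕ) :
    ((∫ x in Set.Ioi (0 : ℝ), x ^ j /
      (Real.cosh (b * Real.sqrt x) - ε * Real.cos (a * Real.sqrt x)) : ℝ) : ℂ) =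
    4 * ∫ t in Set.Ioi (0 : ℝ), (t : ℂ) ^ (2 * j + 1) *
        ((Complex.exp (α * t) - ε * Complex.exp (-(α * t)))⁻¹ *
        (Complex.exp (β * t) - ε * Complex.exp (-(β * t)))⁻¹) := by
  rw [← integral_comp_rpow_Ioi_of_pos (p := 2) two_pos, ← integral_const_mul,
    ← integral_complex_ofReal]
  refine setIntegral_congr_fun measurableSet_Ioi fun t ht => ?_
  have ht : 0 < t := ht
  have h3 : t ^ (2 : ℝ) = t ^ 2 := by norm_cast
  rw [← mul_inv, exp_prod_eq ε hε a b t h1 h2, h3, Real.sqrt_sq ht.le]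
  norm_num
  ring

/-- The two integrals making up `I^±` combine into one sum over `n ≥ 0` and all `m ∈ ℤ`. The first
one gives the terms `m ≥ 0`; the second one, which has `a` and `b` exchanged, corresponds to the pair
`(-iα, iβ)` and gives, after multiplication by `i`, the terms `m < 0`. `ε = -1` is the case of `I^+`,
`ε = 1` that of `I^-`; in the latter `j ≥ 1` is needed for convergence at `0`. -/
lemma hasSum_moments (ε : ℝ) (hε : ε = 1 ∨ ε = -1) {a b : ℝ} (ha : 0 < a) (hb : 0 < b) (j : ℕ)
    (hj : ε = 1 → 1 ≤ j) {α β : ℂ} (hα : α = (b + a * Complex.I) / 2)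
    (hβ : β = (b - a * Complex.I) / 2) :
    HasSum (fun n : ℕ => (ε : ℂ) ^ n * ∑' m : ℤ, (ε : ℂ) ^ m *
        ((2 * j + 1).factorial / ((2 * n + 1) * α + (2 * m + 1) * β) ^ (2 * j + 1 + 1)))
      (((∫ x in Set.Ioi (0 : ℝ), x ^ j /
          (Real.cosh (b * Real.sqrt x) - ε * Real.cos (a * Real.sqrt x)) : ℝ) +
        ε * (-1) ^ (j + 1) * (∫ x in Set.Ioi (0 : ℝ), x ^ j /
          (Real.cosh (a * Real.sqrt x) - ε * Real.cos (b * Real.sqrt x)) : ℝ)) / 4) := by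
  have hn : ‖(ε : ℂ)‖ = 1 := by rcases hε with h | h <;> simp [h]
  have hε2 : (ε : ℂ)⁻¹ = ε := by rcases hε with h | h <;> norm_num [h]
  have hI := Complex.I_mul_I
  have αre : 0 < α.re := by simp [hα]; positivity
  have βre : 0 < β.re := by simp [hβ]; positivity
  have αre' : 0 < (-Complex.I * α).re := by simp [hα]; positivity
  have βre' : 0 < (Complex.I * β).re := by
    rw [show Complex.I * β = (a + b * Complex.I) / 2 by rw [hβ]; linear_combination -a / 2 * hI]
    simp; positivity
  have hmul : ∀ (n : ℕ) (γ : ℂ), ((2 * n + 1) * γ).re = (2 * n + 1) * γ.re := by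
    intro n γ
    simp
  have hbd : ∀ γ : ℂ, 0 < γ.re → ∃ (C : ℝ) (p' : ℕ), 1 ≤ p' ∧ ∀ t : ℝ, 0 < t →
      t ^ (2 * j + 1) * ‖(Complex.exp (γ * t) - ε * Complex.exp (-(γ * t)))⁻¹‖ ≤ C * t ^ p' := by
    intro γ hγ
    rcases hε with h | h
    · refine ⟨1 / (2 * γ.re), 2 * j, by have := hj h; omega, fun t ht => ?_⟩
      simpa [h] using bound_one hγ (2 * j) t ht
    · obtain ⟨C, hC⟩ := bound_neg_one hγ
      refine ⟨C, 2 * j + 1, by omega, fun t ht => ?_⟩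
      simpa [h] using hC (2 * j + 1) t ht
  obtain ⟨C₁, p₁, hp₁, hC₁⟩ := hbd β βre
  obtain ⟨C₂, p₂, hp₂, hC₂⟩ := hbd _ βre'
  have s1 := hasSum_outer hn αre βre (p := 2 * j + 1) (by omega) hp₁ hC₁
  have s2 := hasSum_outer hn αre' βre' (p := 2 * j + 1) (by omega) hp₂ hC₂
  have m1 := moment_eq ε hε a b (α := α) (β := β) (by rw [hα, hβ]; ring)
    (Or.inl (by rw [hα, hβ]; ring)) j
  have m2 := moment_eq ε hε b a (α := -Complex.I * α) (β := Complex.I * β)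
    (by rw [hα, hβ]; linear_combination -a * hI)
    (Or.inr (by rw [hα, hβ]; linear_combination 0 * hI)) j
  have s3 := s1.add (s2.mul_left ((ε : ℂ) * (-1) ^ (j + 1)))
  convert! s3 using 1
  · funext n
    have αn : 0 < ((2 * n + 1) * α).re := by rw [hmul]; positivity
    have αn' : 0 < ((2 * n + 1) * (-Complex.I * α)).re := by rw [hmul]; positivity
    have i1 := hasSum_inner hn βre αn (p := 2 * j + 1) (by omega)
    have i2 := hasSum_inner hn βre' αn' (p := 2 * j + 1) (by omega)
    have i3 := HasSum.of_nat_of_neg_add_one (f := fun m : ℤ => (ε : ℂ) ^ m *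
        ((2 * j + 1).factorial / ((2 * n + 1) * α + (2 * m + 1) * β) ^ (2 * j + 1 + 1)))
        (by simpa using i1.summable.hasSum)
        (by
          convert! i2.summable.hasSum.mul_left ((ε : ℂ) * (-1) ^ (j + 1)) using 1
          funext m
          have e1 : (ε : ℂ) ^ (-((m : ℤ) + 1)) = ε * ε ^ m := by
            rw [zpow_neg, ← inv_zpow, hε2]
            norm_cast
            ring
          have e2 : (((2 * n + 1) * (-Complex.I * α) + (2 * m + 1) * (Complex.I * β)) : ℂ) ^
              (2 * j + 1 + 1) = (-1) ^ (j + 1) * ((2 * n + 1) * α +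
                (2 * ((-((m : ℤ) + 1) : ℤ) : ℂ) + 1) * β) ^ (2 * j + 1 + 1) := by
            rw [show 2 * j + 1 + 1 = 2 * (j + 1) by ring, pow_mul, pow_mul, ← mul_pow]
            congr 1
            push_cast
            linear_combination ((2 * n + 1) * α - (2 * m + 1) * β) ^ 2 * hI
          have e3 : ((-1 : ℂ) ^ (j + 1)) * ((-1) ^ (j + 1))⁻¹ = 1 :=
            mul_inv_cancel₀ (pow_ne_zero _ (by norm_num))
          rw [e1, e2, div_eq_mul_inv, div_eq_mul_inv, mul_inv]
          linear_combination -(ε * ε ^ m * (((2 * j + 1).factorial : ℂ) * (((2 * n + 1) * α +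
                (2 * ((-((m : ℤ) + 1) : ℤ) : ℂ) + 1) * β) ^ (2 * j + 1 + 1))⁻¹)) * e3)
    rw [i3.tsum_eq]
    ring
  · rw [m1, m2]
    ring

/-! ### Lipschitz's formula -/

lemma hasSum_int_even_add_odd {f : ℤ → ℂ} {x y : ℂ} (he : HasSum (fun k : ℤ => f (2 * k)) x)
    (ho : HasSum (fun k : ℤ => f (2 * k + 1)) y) : HasSum f (x + y) := by
  have := mul_right_injective₀ (two_ne_zero' ℤ)
  replace ho := ((add_left_injective 1).comp this).hasSum_range_iff.2 ho
  refine (this.hasSum_range_iff.2 he).add_isCompl ?_ ho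
  convert! Int.isCompl_even_odd using 1
  · ext n
    simp [even_iff_exists_two_mul]
  · ext n
    simp [Odd, eq_comm]

/-- Lipschitz's formula. -/
lemma lipschitz {p : ℕ} (hp : 1 ≤ p) {z : ℂ} (hz : 0 < z.im) :
    HasSum (fun m : ℤ => 1 / (z + m) ^ (p + 1)) ((-2 * π * Complex.I) ^ (p + 1) / p.factorial *
      ∑' r : ℕ, (r : ℂ) ^ p * Complex.exp (2 * π * Complex.I * z) ^ r) := by
  have h := EisensteinSeries.qExpansion_identity hp ⟨z, hz⟩
  simp only at h
  rw [← h]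
  refine Summable.hasSum ?_
  have h2 := EisensteinSeries.linear_right_summable z 1 (k := (p + 1 : ℕ)) (by push_cast; omega)
  simpa only [Int.cast_one, one_mul, zpow_natCast, one_div] using h2

lemma lipschitz_scaled {p : ℕ} (hp : 1 ≤ p) {z : ℂ} (hz : 0 < z.im) (c : ℝ) {N : ℝ} (hN : 0 < N) :
    HasSum (fun m : ℤ => 1 / (z + (N * m + c)) ^ (p + 1))
      ((-2 * π * Complex.I / N) ^ (p + 1) / p.factorial *
      ∑' r : ℕ, (r : ℂ) ^ p * Complex.exp (2 * π * Complex.I * ((z + c) / N)) ^ r) := by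
  have hN' : (N : ℂ) ≠ 0 := by exact_mod_cast hN.ne'
  have h := (lipschitz hp (z := (z + c) / N) (by simp; positivity)).mul_left (1 / (N : ℂ) ^ (p + 1))
  convert! h using 1
  · funext m
    rw [one_div_mul_one_div, ← mul_pow]
    congr 2
    field_simp
    ring
  · rw [div_pow]
    ring

lemma lipschitz_one {p : ℕ} (hp : 1 ≤ p) {z : ℂ} (hz : 0 < z.im) :
    ∑' m : ℤ, 1 / (z + (2 * m + 1)) ^ (p + 1) = (-π * Complex.I) ^ (p + 1) / p.factorial *
      ∑' r : ℕ, ((r : ℂ) ^ p * (-1) ^ r) * Complex.exp (π * Complex.I * z) ^ r := by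
  have h := (lipschitz_scaled hp hz 1 two_pos).tsum_eq
  push_cast at h
  rw [h]
  congr 1
  · congr 2; ring
  · refine tsum_congr fun r => ?_
    rw [show 2 * π * Complex.I * ((z + 1) / 2) = π * Complex.I + π * Complex.I * z by ring,
      Complex.exp_add, Complex.exp_pi_mul_I, mul_pow]
    ring

lemma summable_pow_mul_exp_pow (p : ℕ) {x : ℂ} (hx : ‖x‖ < 1) :
    Summable (fun r : ℕ => (r : ℂ) ^ p * x ^ r) :=
  summable_pow_mul_geometric_of_norm_lt_one p hx

/-- Lipschitz's formula with alternating signs over odd shifts, from the residue classes `1` and `3`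
modulo `4`. -/
lemma lipschitz_neg_one {p : ℕ} (hp : 1 ≤ p) {z : ℂ} (hz : 0 < z.im) :
    ∑' m : ℤ, (-1) ^ m * (1 / (z + (2 * m + 1)) ^ (p + 1)) =
      (-π * Complex.I / 2) ^ (p + 1) / p.factorial *
      ∑' r : ℕ, ((r : ℂ) ^ p * (Complex.I ^ r - (-Complex.I) ^ r)) *
        Complex.exp (π * Complex.I * z / 2) ^ r := by
  have h1 := lipschitz_scaled hp hz 1 (N := 4) (by norm_num)
  have h3 := (lipschitz_scaled hp hz 3 (N := 4) (by norm_num)).neg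
  have h := hasSum_int_even_add_odd (f := fun m : ℤ => (-1) ^ m * (1 / (z + (2 * m + 1)) ^ (p + 1)))
    (by
      convert! h1 using 1
      funext k
      rw [zpow_mul]
      push_cast
      norm_num
      ring_nf)
    (by
      convert! h3 using 1
      funext k
      rw [zpow_add₀ (by norm_num), zpow_mul]
      push_cast
      norm_num
      ring_nf)
  rw [h.tsum_eq, ← mul_neg, ← mul_add, show ((-2 * π * Complex.I / (4 : ℝ)) : ℂ) =
    -π * Complex.I / 2 by push_cast; ring]
  congr 1
  have e1 : Complex.exp (2 * π * Complex.I * ((z + (1 : ℝ)) / (4 : ℝ))) =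
      Complex.I * Complex.exp (π * Complex.I * z / 2) := by
    have : Complex.I * Complex.exp (π * Complex.I * z / 2) =
        Complex.exp (π / 2 * Complex.I) * Complex.exp (π * Complex.I * z / 2) := by
      rw [Complex.exp_pi_div_two_mul_I]
    rw [this, ← Complex.exp_add]
    push_cast
    ring_nf
  have e3 : Complex.exp (2 * π * Complex.I * ((z + (3 : ℝ)) / (4 : ℝ))) =
      -Complex.I * Complex.exp (π * Complex.I * z / 2) := by
    have : -Complex.I = Complex.exp (π / 2 * Complex.I) * Complex.exp (π * Complex.I) := by
      rw [Complex.exp_pi_div_two_mul_I, Complex.exp_pi_mul_I]; ring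
    rw [this, ← Complex.exp_add, ← Complex.exp_add]
    push_cast
    ring_nf
  have hn : ‖Complex.exp (π * Complex.I * z / 2)‖ < 1 := by
    rw [Complex.norm_exp, Real.exp_lt_one_iff]
    have : (π * Complex.I * z / 2).re = -(π * z.im / 2) := by
      rw [show π * Complex.I * z / 2 = ((π / 2 : ℝ) : ℂ) * (Complex.I * z) by push_cast; ring,
        Complex.re_ofReal_mul]
      simp
      ring
    rw [this]
    have := Real.pi_pos
    simp; positivity
  rw [e1, e3, ← sub_eq_add_neg, ← Summable.tsum_sub]
  · refine tsum_congr fun r => ?_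
    rw [mul_pow, mul_pow]
    ring
  · exact summable_pow_mul_exp_pow p (by simpa using hn)
  · exact summable_pow_mul_exp_pow p (by simpa using hn)

/-! ### The coefficients and their self-convolution -/

/-- The coefficient `(-1)^s / (y^r + y^{-r})` attached to the odd integer `r = 2s + 1`; up to scaling
these are the Fourier coefficients of the Jacobi function `sd`. -/
noncomputable def oddCoeff (y : ℂ) (s : ℤ) : ℂ :=
  (-1) ^ s / (y ^ (2 * s + 1) + y ^ (-(2 * s + 1)))

/-- The moments `∑_r r^i · oddCoeff`, over odd `r = 2s + 1`: up to constants, the Taylor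
coefficients of the Fourier series with coefficients `oddCoeff`. -/
noncomputable def oddMoment (y : ℂ) (i : ℕ) : ℂ :=
  ∑' s : ℤ, oddCoeff y s * (2 * s + 1) ^ i

/-- The coefficient attached to the even integer `2N` in the square of the Fourier series with
coefficients `oddCoeff`, for `N ≠ 0`. At `N = 0` the formula reads `0 / 0 = 0`, which is not the
constant term of the square; this term never contributes to a moment of positive order. -/
noncomputable def evenCoeff (y : ℂ) (N : ℤ) : ℂ :=
  (-1) ^ (N - 1) * N / (y ^ (-(2 * N)) - y ^ (2 * N))

/-- A function on `ℤ` going from `1` at `+∞` to `0` at `-∞`, in terms of which the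
products `oddCoeff y s * oddCoeff y (N - 1 - s)` telescope. -/
noncomputable def stepFn (y : ℂ) (s : ℤ) : ℂ := 1 / (1 + y ^ (2 * (2 * s + 1)))

section
variable {y : ℂ}

lemma zpow_ne_of_norm_lt_one (hy : ‖y‖ < 1) {k : ℤ} (hk : k ≠ 0) {ζ : ℂ}
    (hζ : ‖ζ‖ = 1) : y ^ k ≠ ζ := by
  intro h
  have h1 : ‖y‖ ^ k = 1 := by rw [← norm_zpow, h, hζ]
  exact hk ((zpow_eq_one_iff_right₀ (norm_nonneg _) hy.ne).1 h1)

lemma one_add_zpow_ne (hy : ‖y‖ < 1) (s : ℤ) : 1 + y ^ (2 * (2 * s + 1)) ≠ 0 := by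
  intro h
  exact zpow_ne_of_norm_lt_one hy (k := 2 * (2 * s + 1)) (ζ := -1) (by omega) (by simp)
    (by linear_combination h)

lemma norm_one_add_pow_ge (hy : ‖y‖ < 1) {k : ℕ} (hk : k ≠ 0) : 1 - ‖y‖ ≤ ‖1 + y ^ k‖ := by
  have h1 := norm_sub_norm_le (1 : ℂ) (-y ^ k)
  rw [norm_neg, norm_pow, norm_one, sub_neg_eq_add] at h1
  have h2 := pow_le_of_le_one (norm_nonneg y) hy.le hk
  linarith

lemma oddCoeff_nat (hy0 : y ≠ 0) (s : ℕ) :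
    oddCoeff y s = (-1) ^ s * (y ^ (2 * s + 1) / (1 + y ^ (2 * (2 * s + 1)))) := by
  have h : y ^ (2 * s + 1) ≠ 0 := pow_ne_zero _ hy0
  rw [oddCoeff, zpow_neg, show (2 * (s : ℤ) + 1) = ((2 * s + 1 : ℕ) : ℤ) by push_cast; ring,
    zpow_natCast, zpow_natCast, mul_comm 2 (2 * s + 1), pow_mul, div_eq_mul_inv]
  congr 1
  generalize y ^ (2 * s + 1) = u at h
  rw [show u + u⁻¹ = (1 + u ^ 2) / u by field_simp; ring, inv_div]

lemma oddCoeff_neg (s : ℤ) : oddCoeff y (-(s + 1)) = -oddCoeff y s := by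
  rw [oddCoeff, oddCoeff, show 2 * (-(s + 1)) + 1 = -(2 * s + 1) by ring, neg_neg,
    add_comm (y ^ (-(2 * s + 1))), ← neg_div]
  congr 1
  rw [zpow_neg, ← inv_zpow, zpow_add₀ (by norm_num)]
  norm_num

lemma summable_oddCoeff (hy0 : y ≠ 0) (hy : ‖y‖ < 1) (i : ℕ) :
    Summable (fun s : ℤ => ‖oddCoeff y s * (2 * s + 1) ^ i‖) := by
  have key : Summable (fun s : ℕ => ‖oddCoeff y s * (2 * s + 1) ^ i‖) := by
    have h1 : Summable (fun r : ℕ => (r : ℝ) ^ i * ‖y‖ ^ r) :=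
      summable_pow_mul_geometric_of_norm_lt_one i (by simpa using hy)
    have h2 := (h1.comp_injective (i := fun s : ℕ => 2 * s + 1)
      (fun a b h => by simpa using h)).mul_left (1 / (1 - ‖y‖))
    refine Summable.of_nonneg_of_le (fun _ => norm_nonneg _) (fun s => ?_) h2
    have h3 := norm_one_add_pow_ge hy (k := 2 * (2 * s + 1)) (by omega)
    have h4 : 0 < 1 - ‖y‖ := by linarith
    have h5 : ‖((2 * s + 1 : ℂ)) ^ i‖ = ((2 * s + 1 : ℕ) : ℝ) ^ i := by
      rw [norm_pow]
      congr 1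
      rw [show (2 * s + 1 : ℂ) = ((2 * s + 1 : ℕ) : ℂ) by push_cast; ring, Complex.norm_natCast]
    rw [oddCoeff_nat hy0, norm_mul, norm_mul, norm_div, h5]
    simp only [norm_pow, norm_neg, norm_one, one_pow, one_mul, Function.comp]
    rw [mul_comm, mul_left_comm]
    gcongr
    rw [div_mul_eq_mul_div, one_mul]
    gcongr
  refine Summable.of_nat_of_neg_add_one (by simpa using key) ?_
  convert! key using 1
  funext s
  rw [oddCoeff_neg, norm_mul, norm_mul, norm_neg, norm_pow, norm_pow]
  congr 2
  rw [← norm_neg]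
  congr 1
  push_cast
  ring

lemma hasSum_oddMoment (hy0 : y ≠ 0) (hy : ‖y‖ < 1) (i : ℕ) :
    HasSum (fun s : ℤ => oddCoeff y s * (2 * s + 1) ^ i) (oddMoment y i) :=
  (summable_oddCoeff hy0 hy i).of_norm.hasSum

lemma oddMoment_even (hy0 : y ≠ 0) (hy : ‖y‖ < 1) {i : ℕ} (hi : Even i) : oddMoment y i = 0 := by
  have h := hasSum_oddMoment hy0 hy i
  have h2 := ((Equiv.neg ℤ).trans (Equiv.subRight (1 : ℤ))).hasSum_iff.2 h
  have h3 : HasSum (fun s : ℤ => oddCoeff y s * (2 * s + 1) ^ i) (-oddMoment y i) := by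
    convert! h2.neg using 1
    funext s
    simp only [Function.comp, Equiv.trans_apply, Equiv.neg_apply, Equiv.subRight_apply]
    rw [show -s - 1 = -(s + 1) by ring, oddCoeff_neg, neg_mul, neg_neg]
    push_cast
    rw [show 2 * -((s : ℂ) + 1) + 1 = -(2 * s + 1) by ring, hi.neg_pow]
  have := h.unique h3
  linear_combination this / 2

lemma oddMoment_odd (hy0 : y ≠ 0) (hy : ‖y‖ < 1) {i : ℕ} (hi : Odd i) :
    oddMoment y i = 2 * ∑' s : ℕ, oddCoeff y s * (2 * s + 1) ^ i := by
  have hs : Summable (fun s : ℕ => oddCoeff y s * (2 * s + 1) ^ i) := by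
    have := (summable_oddCoeff hy0 hy i).of_norm.comp_injective Nat.cast_injective
    simpa [Function.comp_def] using this
  have := HasSum.of_nat_of_neg_add_one (f := fun s : ℤ => oddCoeff y s * (2 * s + 1) ^ i)
    (by simpa using hs.hasSum) (m' := ∑' s : ℕ, oddCoeff y s * (2 * s + 1) ^ i) (by
      convert! hs.hasSum using 1
      funext s
      rw [oddCoeff_neg]
      push_cast
      rw [show 2 * -((s : ℂ) + 1) + 1 = -(2 * s + 1) by ring, hi.neg_pow]
      ring)
  rw [oddMoment, this.tsum_eq, two_mul]

/-- A telescoping sum. Rather than taking limits of partial sums over `ℤ`, `stepFn` is compared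
with the Heaviside function: the difference is summable, hence has the same sum as its shift. -/
lemma hasSum_stepFn_one (hy0 : y ≠ 0) (hy : ‖y‖ < 1) :
    HasSum (fun s : ℤ => stepFn y s - stepFn y (s - 1)) 1 := by
  have hy4 := one_add_zpow_ne hy
  let e : ℤ → ℂ := fun s => stepFn y s - if 0 ≤ s then 1 else 0
  have hneg : ∀ s : ℕ, e (-((s : ℤ) + 1)) = -e s := by
    intro s
    have h1 := hy4 s
    have h2 : y ^ (2 * (2 * (s : ℤ) + 1)) ≠ 0 := zpow_ne_zero _ hy0
    have h3 : ¬ (0 ≤ -((s : ℤ) + 1)) := by omega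
    simp only [e, stepFn, h3, if_false, Int.natCast_nonneg, if_true]
    rw [show 2 * (2 * (-((s : ℤ) + 1)) + 1) = -(2 * (2 * (s : ℤ) + 1)) by ring, zpow_neg]
    generalize y ^ (2 * (2 * (s : ℤ) + 1)) = u at h1 h2
    rw [show 1 + u⁻¹ = (1 + u) / u by field_simp; ring, one_div_div]
    field_simp
    ring
  have hnat : Summable (fun s : ℕ => e s) := by
    have h1 : Summable (fun s : ℕ => 1 / (1 - ‖y‖) * ‖y‖ ^ s) :=
      (summable_geometric_of_lt_one (norm_nonneg y) hy).mul_left _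
    refine Summable.of_norm_bounded h1 fun s => ?_
    have h3 := norm_one_add_pow_ge hy (k := 2 * (2 * s + 1)) (by omega)
    have h4 : 0 < 1 - ‖y‖ := by linarith
    have h5 : e s = -(y ^ (2 * (2 * s + 1)) / (1 + y ^ (2 * (2 * s + 1)))) := by
      have h1 := hy4 s
      simp only [e, stepFn, Int.natCast_nonneg, if_true]
      rw [show (2 * (2 * (s : ℤ) + 1)) = ((2 * (2 * s + 1) : ℕ) : ℤ) by push_cast; ring,
        zpow_natCast] at h1 ⊢
      field_simp
      ring
    rw [h5, norm_neg, norm_div, norm_pow, div_mul_eq_mul_div, one_mul]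
    have h6 : ‖y‖ ^ (2 * (2 * s + 1)) ≤ ‖y‖ ^ s :=
      pow_le_pow_of_le_one (norm_nonneg y) hy.le (by omega)
    gcongr
  have he : Summable e := Summable.of_nat_of_neg_add_one hnat (by
    simp only [hneg]
    exact hnat.neg)
  have h1 := he.hasSum.sub ((Equiv.subRight (1 : ℤ)).hasSum_iff.2 he.hasSum)
  have h2 : HasSum (fun s : ℤ => if s = 0 then (1 : ℂ) else 0) 1 := hasSum_ite_eq 0 1
  have h3 := h1.add h2
  rw [sub_self, zero_add] at h3
  convert! h3 using 1
  funext s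
  simp only [Function.comp, Equiv.subRight_apply, e]
  rcases lt_trichotomy s 0 with h | h | h
  · rw [if_neg (by omega), if_neg (by omega), if_neg (by omega)]; ring
  · rw [if_pos (by omega), if_neg (by omega), if_pos (by omega)]; ring
  · rw [if_pos (by omega), if_pos (by omega), if_neg (by omega)]; ring

lemma hasSum_stepFn (hy0 : y ≠ 0) (hy : ‖y‖ < 1) (N : ℤ) :
    HasSum (fun s : ℤ => stepFn y s - stepFn y (s - N)) N := by
  have hnat : ∀ N : ℕ, HasSum (fun s : ℤ => stepFn y s - stepFn y (s - N)) N := by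
    intro N
    induction N with
    | zero => simp
    | succ N ih =>
      have h := ih.add ((Equiv.subRight (N : ℤ)).hasSum_iff.2 (hasSum_stepFn_one hy0 hy))
      convert! h using 1
      · funext s
        simp only [Function.comp, Equiv.subRight_apply]
        push_cast
        rw [sub_add_eq_sub_sub]
        ring
      · push_cast; ring
  obtain ⟨n, rfl | rfl⟩ := N.eq_nat_or_neg
  · simpa using hnat n
  · have h := ((Equiv.addRight (n : ℤ)).hasSum_iff.2 (hnat n)).neg
    convert! h using 1
    · funext s
      simp
    · push_cast; ring

/-- The self-convolution of `oddCoeff` is `evenCoeff`: partial fractions turn the product into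
`stepFn y s - stepFn y (s - N)` times a factor independent of `s`. -/
lemma hasSum_conv (hy0 : y ≠ 0) (hy : ‖y‖ < 1) {N : ℤ} (hN : N ≠ 0) :
    HasSum (fun s : ℤ => oddCoeff y s * oddCoeff y (N - 1 - s)) (evenCoeff y N) := by
  have h := (hasSum_stepFn hy0 hy N).mul_left ((-1) ^ (N - 1) / (y ^ (-(2 * N)) - y ^ (2 * N)))
  convert! h using 1
  · funext s
    have h1 := one_add_zpow_ne hy s
    have h2 := one_add_zpow_ne hy (s - N)
    have h3 : y ^ (2 * (2 * N)) ≠ 1 :=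
      zpow_ne_of_norm_lt_one hy (by omega) (by simp)
    have e1 : (-1 : ℂ) ^ (N - 1) = (-1) ^ s * (-1) ^ (N - 1 - s) := by
      rw [← zpow_add₀ (by norm_num)]; congr 1; ring
    rw [oddCoeff, oddCoeff, stepFn, stepFn, e1]
    rw [show 2 * (N - 1 - s) + 1 = 2 * N - (2 * s + 1) by ring, neg_sub, zpow_sub₀ hy0 (2 * N),
      zpow_sub₀ hy0 (2 * s + 1), zpow_neg, zpow_neg]
    have e2 : y ^ (2 * (2 * N)) = y ^ (2 * N) * y ^ (2 * N) := by
      rw [← zpow_add₀ hy0]; congr 1; ring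
    have e3 : y ^ (2 * (2 * s + 1)) = y ^ (2 * s + 1) * y ^ (2 * s + 1) := by
      rw [← zpow_add₀ hy0]; congr 1; ring
    have e4 : y ^ (2 * (2 * (s - N) + 1)) =
        y ^ (2 * s + 1) * y ^ (2 * s + 1) / (y ^ (2 * N) * y ^ (2 * N)) := by
      rw [← e2, ← e3, ← zpow_sub₀ hy0]; congr 1; ring
    rw [e2] at h3
    rw [e3] at h1 ⊢
    rw [e4] at h2 ⊢
    clear e1 e2 e3 e4 h
    have hu : y ^ (2 * s + 1) ≠ 0 := zpow_ne_zero _ hy0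
    have hv : y ^ (2 * N) ≠ 0 := zpow_ne_zero _ hy0
    generalize y ^ (2 * s + 1) = u at h1 h2 hu ⊢
    generalize y ^ (2 * N) = v at h2 h3 hv ⊢
    have h4 : v * v + u * u ≠ 0 := by
      intro h; apply h2; field_simp; linear_combination h
    have h5 : 1 - v * v ≠ 0 := by
      intro h; apply h3; linear_combination -h
    have d1 : u + u⁻¹ = (1 + u * u) / u := by field_simp; ring
    have d2 : v / u + u / v = (v * v + u * u) / (u * v) := by field_simp
    have d3 : v⁻¹ - v = (1 - v * v) / v := by field_simp
    have d4 : 1 + u * u / (v * v) = (v * v + u * u) / (v * v) := by field_simp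
    rw [d1, d2, d3, d4]
    rw [← sq, ← sq] at h4
    rw [← sq] at h1 h5
    rw [← sq, ← sq]
    field_simp
    ring
  · rw [evenCoeff]; ring

end

/-! ### Lambert series and convolution moments -/

/-- Exchange of the two summations left after Lipschitz's formula; the sum over `n` is geometric
and yields a Lambert-type series. -/
lemma tsum_swap {x ε : ℂ} (hx : ‖x‖ < 1) (hε : ‖ε‖ = 1) {c : ℕ → ℂ} (hc0 : c 0 = 0) {D : ℝ}
    {p : ℕ} (hc : ∀ r, ‖c r‖ ≤ D * (r : ℝ) ^ p) :
    ∑' n : ℕ, ε ^ n * ∑' r : ℕ, c r * (x ^ (2 * n + 1)) ^ r =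
      ∑' r : ℕ, c r * (x ^ r / (1 - ε * x ^ (2 * r))) := by
  have hsum : Summable (Function.uncurry fun n r : ℕ => ε ^ n * (c r * (x ^ (2 * n + 1)) ^ r)) := by
    have h1 : Summable (fun n : ℕ => ‖x‖ ^ n) := summable_geometric_of_lt_one (norm_nonneg x) hx
    have h2 : Summable (fun r : ℕ => D * ((r : ℝ) ^ p * ‖x‖ ^ r)) :=
      (summable_pow_mul_geometric_of_norm_lt_one p (by simpa using hx)).mul_left D
    have hD : 0 ≤ D := by simpa using (norm_nonneg _).trans (hc 1)
    have h3 := h1.mul_of_nonneg h2 (fun n => by positivity) (fun r => by positivity)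
    refine Summable.of_norm_bounded h3 ?_
    rintro ⟨n, r⟩
    simp only [Function.uncurry_apply_pair]
    rw [norm_mul, norm_pow, hε, one_pow, one_mul, norm_mul]
    rcases Nat.eq_zero_or_pos r with rfl | hr
    · rw [hc0, norm_zero, zero_mul]; positivity
    · rw [norm_pow, norm_pow, ← pow_mul]
      have h4 : ‖x‖ ^ ((2 * n + 1) * r) ≤ ‖x‖ ^ (n + r) :=
        pow_le_pow_of_le_one (norm_nonneg x) hx.le (by nlinarith)
      calc ‖c r‖ * ‖x‖ ^ ((2 * n + 1) * r) ≤ (D * (r : ℝ) ^ p) * ‖x‖ ^ (n + r) := by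
            gcongr; exact hc r
        _ = _ := by rw [pow_add]; ring
  simp_rw [← tsum_mul_left]
  rw [← hsum.tsum_comm]
  refine tsum_congr fun r => ?_
  rcases Nat.eq_zero_or_pos r with rfl | hr
  · simp [hc0]
  · have h5 : ‖ε * x ^ (2 * r)‖ < 1 := by
      rw [norm_mul, hε, one_mul, norm_pow]
      exact pow_lt_one₀ (norm_nonneg x) hx (by omega)
    rw [div_eq_mul_inv, ← tsum_geometric_of_norm_lt_one h5, ← mul_assoc, ← tsum_mul_left]
    refine tsum_congr fun n => ?_
    rw [mul_pow, ← pow_mul, ← pow_mul, show (2 * n + 1) * r = r + 2 * r * n by ring, pow_add]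
    ring

section
variable {y : ℂ}

/-- The binomial self-convolution of the sequence `oddMoment y`, that is, the derivatives at `0` of
the square of the exponential generating function of `oddMoment y`. -/
noncomputable def convMoment (y : ℂ) (l : ℕ) : ℂ :=
  ∑ i ∈ Finset.range (l + 1), (l.choose i : ℂ) * oddMoment y i * oddMoment y (l - i)

/-- The moments of `evenCoeff` are `convMoment`: Cauchy product over `ℤ × ℤ`, the binomial theorem
for `((2s+1) + (2t+1))^l`, and summation along the lines `s + t + 1 = N`. The line `N = 0` contributes
`0^l = 0`. -/
lemma hasSum_evenCoeff (hy0 : y ≠ 0) (hy : ‖y‖ < 1) {l : ℕ} (hl : l ≠ 0) :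
    HasSum (fun N : ℤ => evenCoeff y N * (2 * N) ^ l) (convMoment y l) := by
  have hprod : ∀ i j : ℕ, HasSum (fun q : ℤ × ℤ => (oddCoeff y q.1 * (2 * q.1 + 1) ^ i) *
      (oddCoeff y q.2 * (2 * q.2 + 1) ^ j)) (oddMoment y i * oddMoment y j) := by
    intro i j
    have h := summable_mul_of_summable_norm (summable_oddCoeff hy0 hy i) (summable_oddCoeff hy0 hy j)
    have h' := (hasSum_oddMoment hy0 hy i).mul (hasSum_oddMoment hy0 hy j) h
    exact h'
  have h1 := hasSum_sum (s := Finset.range (l + 1)) (fun i _ =>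
    (hprod i (l - i)).mul_left (l.choose i : ℂ))
  have h2 : HasSum (fun q : ℤ × ℤ => oddCoeff y q.1 * oddCoeff y q.2 *
      ((2 * q.1 + 1) + (2 * q.2 + 1)) ^ l) (convMoment y l) := by
    convert! h1 using 1
    · funext q
      rw [add_pow, Finset.mul_sum]
      exact Finset.sum_congr rfl fun i _ => by ring
    · rw [convMoment]
      exact Finset.sum_congr rfl fun i _ => mul_assoc _ _ _
  let e : ℤ × ℤ ≃ ℤ × ℤ :=
    { toFun := fun q => (q.2, q.1 - 1 - q.2)
      invFun := fun q => (q.1 + q.2 + 1, q.1)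
      left_inv := fun q => by ext <;> simp
      right_inv := fun q => by ext <;> simp }
  refine (e.hasSum_iff.2 h2).prod_fiberwise fun N => ?_
  have h3 : ∀ s : ℤ, (2 * (s : ℂ) + 1) + (2 * ((N - 1 - s : ℤ) : ℂ) + 1) = 2 * N := by
    intro s; push_cast; ring
  simp only [Function.comp, e, Equiv.coe_fn_mk, h3]
  rcases eq_or_ne N 0 with rfl | hN
  · simp [hl]
  · exact (hasSum_conv hy0 hy hN).mul_right _

lemma evenCoeff_neg (N : ℤ) : evenCoeff y (-N) = evenCoeff y N := by
  rw [evenCoeff, evenCoeff, show 2 * -N = -(2 * N) by ring, neg_neg,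
    ← neg_sub (y ^ (-(2 * N))), div_neg, ← neg_div, show -N - 1 = -(N - 1) - 2 by ring,
    zpow_sub₀ (by norm_num), zpow_neg, ← inv_zpow]
  norm_num

lemma evenCoeff_nat (hy0 : y ≠ 0) (r : ℕ) :
    evenCoeff y r = -((-1) ^ r * r * ((y ^ 2) ^ r / (1 - 1 * (y ^ 2) ^ (2 * r)))) := by
  have h : (y ^ 2) ^ r ≠ 0 := pow_ne_zero _ (pow_ne_zero _ hy0)
  rw [evenCoeff, zpow_neg, show 2 * (r : ℤ) = ((2 * r : ℕ) : ℤ) by push_cast; ring,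
    zpow_natCast, pow_mul, mul_comm 2 r, pow_mul _ r 2, zpow_sub₀ (by norm_num), zpow_natCast]
  generalize (y ^ 2) ^ r = u at h
  rw [show u⁻¹ - u = (1 - 1 * u ^ 2) / u by field_simp; try ring]
  rw [div_div_eq_mul_div]
  push_cast
  ring

lemma convMoment_even (hy0 : y ≠ 0) (hy : ‖y‖ < 1) {l : ℕ} (hl : l ≠ 0) (hl2 : Even l) :
    convMoment y l = -2 ^ (l + 1) * ∑' r : ℕ, ((r : ℂ) ^ (l + 1) * (-1) ^ r) *
      ((y ^ 2) ^ r / (1 - 1 * (y ^ 2) ^ (2 * r))) := by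
  have h := hasSum_evenCoeff hy0 hy hl
  have hs : Summable (fun r : ℕ => evenCoeff y r * (2 * (r : ℂ)) ^ l) := by
    have := h.summable.comp_injective Nat.cast_injective
    simpa [Function.comp_def] using this
  have h2 := HasSum.of_nat_of_neg (f := fun N : ℤ => evenCoeff y N * (2 * N) ^ l)
    (by simpa using hs.hasSum) (g' := ∑' r : ℕ, evenCoeff y r * (2 * r) ^ l) (by
      convert! hs.hasSum using 1
      funext s
      rw [evenCoeff_neg]
      push_cast
      rw [mul_neg, hl2.neg_pow])
  rw [h.unique h2, ← tsum_mul_left]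
  simp only [Int.cast_zero, mul_zero, zero_pow hl, sub_zero]
  rw [← two_mul, ← tsum_mul_left]
  refine tsum_congr fun r => ?_
  rw [evenCoeff_nat hy0]
  ring

lemma oddMoment_eq (hy0 : y ≠ 0) (hy : ‖y‖ < 1) {p : ℕ} (hp : Odd p) :
    ∑' r : ℕ, ((r : ℂ) ^ p * (Complex.I ^ r - (-Complex.I) ^ r)) *
      (y ^ r / (1 - (-1) * y ^ (2 * r))) = Complex.I * oddMoment y p := by
  rw [oddMoment_odd hy0 hy hp, ← mul_assoc, ← tsum_mul_left]
  have hinj : Function.Injective (fun s : ℕ => 2 * s + 1) := fun a b h => by simpa using h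
  rw [← hinj.tsum_eq (f := fun r : ℕ => ((r : ℂ) ^ p * (Complex.I ^ r - (-Complex.I) ^ r)) *
      (y ^ r / (1 - (-1) * y ^ (2 * r))))]
  · refine tsum_congr fun s => ?_
    rw [oddCoeff_nat hy0, Odd.neg_pow ⟨s, rfl⟩, pow_succ Complex.I, pow_mul, Complex.I_sq]
    push_cast
    ring
  · intro r hr
    rcases Nat.even_or_odd r with h | ⟨s, h⟩
    · exact absurd (by simp [h.neg_pow]) hr
    · exact ⟨s, h.symm⟩

lemma coeff_X_mul_derivative (f : PowerSeries ℂ) (l : ℕ) :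
    PowerSeries.coeff l (PowerSeries.X * PowerSeries.derivative ℂ f) =
      l * PowerSeries.coeff l f := by
  cases l with
  | zero => simp
  | succ l =>
    rw [PowerSeries.coeff_succ_X_mul, PowerSeries.coeff_derivative]
    push_cast
    ring

/-- With `F` the exponential generating function of `oddMoment y`, this is the coefficient of
`X^r` in `F · X(F²)' = 2 · XF' · F²`. -/
lemma convMoment_identity (y : ℂ) (r : ℕ) :
    ∑ i ∈ Finset.range (r + 1), ((r : ℂ) - 3 * i) * (r.choose i : ℂ) *
      oddMoment y i * convMoment y (r - i) = 0 := by
  let F : PowerSeries ℂ := PowerSeries.mk fun i => oddMoment y i / i.factorial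
  have hchoose : ∀ l i : ℕ, i ∈ Finset.range (l + 1) →
      (l.choose i : ℂ) / l.factorial = 1 / (i.factorial * (l - i).factorial) := by
    intro l i hi
    rw [Nat.cast_choose ℂ (Finset.mem_range_succ_iff.1 hi)]
    have := Nat.factorial_ne_zero l
    field_simp
  have hG : ∀ l, PowerSeries.coeff l (F * F) = convMoment y l / l.factorial := by
    intro l
    rw [PowerSeries.coeff_mul, Finset.Nat.sum_antidiagonal_eq_sum_range_succ_mk, convMoment,
      Finset.sum_div]
    refine Finset.sum_congr rfl fun i hi => ?_
    rw [mul_assoc, mul_div_right_comm, hchoose l i hi]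
    simp only [F, PowerSeries.coeff_mk]
    field_simp
  have h0 : F * (PowerSeries.X * PowerSeries.derivative ℂ (F * F)) -
      2 * ((PowerSeries.X * PowerSeries.derivative ℂ F) * (F * F)) = 0 := by
    rw [Derivation.leibniz, smul_eq_mul]
    ring
  have h1 := congrArg (PowerSeries.coeff r) h0
  rw [map_sub, map_zero, two_mul, map_add, ← two_mul, PowerSeries.coeff_mul, PowerSeries.coeff_mul,
    Finset.mul_sum, ← Finset.sum_sub_distrib,
    Finset.Nat.sum_antidiagonal_eq_sum_range_succ_mk] at h1
  have h2 : (r.factorial : ℂ) ≠ 0 := by exact_mod_cast Nat.factorial_ne_zero r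
  rw [← mul_eq_zero_iff_left (inv_ne_zero h2), ← h1, Finset.mul_sum]
  refine Finset.sum_congr rfl fun i hi => ?_
  have h3 := hchoose r i hi
  simp only [coeff_X_mul_derivative, hG]
  simp only [F, PowerSeries.coeff_mk]
  rw [Nat.cast_sub (Finset.mem_range_succ_iff.1 hi)]
  rw [show (r.factorial : ℂ)⁻¹ * (((r : ℂ) - 3 * i) * (r.choose i : ℂ) * oddMoment y i *
    convMoment y (r - i)) = ((r : ℂ) - 3 * i) * (r.choose i / r.factorial) * oddMoment y i *
      convMoment y (r - i) by ring, h3]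
  field_simp
  ring
end

/-! ### The lattice sums as moments -/

section
variable {α β : ℂ}

/-- The lattice sum of `hasSum_moments` for `ε = -1`, as an odd moment. -/
lemma tsum_lattice_neg_one (hβ : β ≠ 0) (hσ : 0 < (α / β).im) {y : ℂ}
    (hy : y = Complex.exp (π * Complex.I * (α / β) / 2)) (hy0 : y ≠ 0) (hy1 : ‖y‖ < 1)
    {p : ℕ} (hp : 1 ≤ p) (hp2 : Odd p) :
    ∑' n : ℕ, (-1 : ℂ) ^ n * ∑' m : ℤ, (-1 : ℂ) ^ m *
        (p.factorial / ((2 * n + 1) * α + (2 * m + 1) * β) ^ (p + 1)) =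
      (-π * Complex.I / (2 * β)) ^ (p + 1) * (Complex.I * oddMoment y p) := by
  have hf : (p.factorial : ℂ) ≠ 0 := by exact_mod_cast Nat.factorial_ne_zero p
  rw [← oddMoment_eq hy0 hy1 hp2, ← tsum_swap (D := 2) (p := p) hy1 (by simp) (by simp) (by
    intro r
    rw [norm_mul, norm_pow, Complex.norm_natCast, mul_comm]
    gcongr
    refine (norm_sub_le _ _).trans ?_
    simp
    norm_num), ← tsum_mul_left]
  refine tsum_congr fun n => ?_
  have hz : 0 < ((2 * n + 1) * (α / β)).im := by
    rw [show (2 * n + 1 : ℂ) = ((2 * n + 1 : ℝ) : ℂ) by push_cast; ring, Complex.im_ofReal_mul]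
    positivity
  have h := lipschitz_neg_one hp hz
  rw [show π * Complex.I * ((2 * n + 1) * (α / β)) / 2 =
    ((2 * n + 1 : ℕ) : ℂ) * (π * Complex.I * (α / β) / 2) by push_cast; ring, Complex.exp_nat_mul,
    ← hy] at h
  have h2 : ∀ m : ℤ, (-1 : ℂ) ^ m *
        (p.factorial / ((2 * n + 1) * α + (2 * m + 1) * β) ^ (p + 1)) =
      p.factorial / β ^ (p + 1) *
        ((-1) ^ m * (1 / ((2 * n + 1) * (α / β) + (2 * m + 1)) ^ (p + 1))) := by
    intro m
    rw [show (2 * n + 1) * α + (2 * m + 1) * β = β * ((2 * n + 1) * (α / β) + (2 * m + 1)) by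
      field_simp, mul_pow, div_mul_eq_div_div]
    rw [div_eq_mul_one_div (_ / _)]
    exact mul_left_comm _ _ _
  simp_rw [h2]
  rw [tsum_mul_left, h, ← div_div (-π * Complex.I) 2 β, div_pow _ β]
  field_simp

/-- The lattice sum of `hasSum_moments` for `ε = 1`, as a convolution moment. -/
lemma tsum_lattice_one (hβ : β ≠ 0) (hσ : 0 < (α / β).im) {y : ℂ}
    (hy : y = Complex.exp (π * Complex.I * (α / β) / 2)) (hy0 : y ≠ 0) (hy1 : ‖y‖ < 1)
    {l : ℕ} (hl : l ≠ 0) (hl2 : Even l) :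
    ∑' n : ℕ, (1 : ℂ) ^ n * ∑' m : ℤ, (1 : ℂ) ^ m *
        ((l + 1).factorial / ((2 * n + 1) * α + (2 * m + 1) * β) ^ (l + 1 + 1)) =
      -2 * (-π * Complex.I / (2 * β)) ^ (l + 1 + 1) * convMoment y l := by
  have hf : ((l + 1).factorial : ℂ) ≠ 0 := by exact_mod_cast Nat.factorial_ne_zero (l + 1)
  have hy2 : ‖y ^ 2‖ < 1 := by
    rw [norm_pow]
    exact pow_lt_one₀ (norm_nonneg _) hy1 (by norm_num)
  rw [convMoment_even hy0 hy1 hl hl2, ← tsum_swap (D := 1) (p := l + 1) hy2 (by simp) (by simp) (by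
    intro r
    simp), ← mul_assoc, ← tsum_mul_left]
  refine tsum_congr fun n => ?_
  have hz : 0 < ((2 * n + 1) * (α / β)).im := by
    rw [show (2 * n + 1 : ℂ) = ((2 * n + 1 : ℝ) : ℂ) by push_cast; ring, Complex.im_ofReal_mul]
    positivity
  have h := lipschitz_one (p := l + 1) (by omega) hz
  rw [show π * Complex.I * ((2 * n + 1) * (α / β)) =
    ((2 * (2 * n + 1) : ℕ) : ℂ) * (π * Complex.I * (α / β) / 2) by push_cast; ring,
    Complex.exp_nat_mul, ← hy, pow_mul] at h
  have h2 : ∀ m : ℤ, (1 : ℂ) ^ m *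
        ((l + 1).factorial / ((2 * n + 1) * α + (2 * m + 1) * β) ^ (l + 1 + 1)) =
      (l + 1).factorial / β ^ (l + 1 + 1) *
        (1 / ((2 * n + 1) * (α / β) + (2 * m + 1)) ^ (l + 1 + 1)) := by
    intro m
    rw [show (2 * n + 1) * α + (2 * m + 1) * β = β * ((2 * n + 1) * (α / β) + (2 * m + 1)) by
      field_simp, mul_pow, one_zpow, one_mul, div_mul_eq_div_div, div_eq_mul_one_div (_ / _)]
  simp_rw [h2]
  rw [tsum_mul_left, h]
  rw [div_pow (-π * Complex.I) (2 * β), mul_pow 2 β]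
  field_simp
  ring
end

/-! ### The integrals as moments, and the identity -/

lemma ellipticK_pos {k : ℝ} (hk : k ∈ Set.Ioo (0 : ℝ) 1) : 0 < ellipticK k := by
  have hpos : ∀ θ : ℝ, 0 < 1 - k ^ 2 * Real.sin θ ^ 2 := by
    intro θ
    have h1 : k ^ 2 < 1 := by have := hk.1; have := hk.2; nlinarith
    nlinarith [Real.sin_sq_le_one θ, sq_nonneg k, sq_nonneg (Real.sin θ)]
  refine intervalIntegral.intervalIntegral_pos_of_pos (Continuous.intervalIntegrable ?_ _ _)
    (fun θ => Real.rpow_pos_of_pos (hpos θ) _) (by positivity)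
  exact Continuous.rpow_const (by fun_prop) fun θ => Or.inl (ne_of_gt (hpos θ))

/-- `I^+_j` and `I^-_m` are, up to powers of a common constant `κ`, the odd moments and the even
convolution moments. Only the positivity of `K` and `K'` enters. -/
lemma exists_moment_form {k : ℝ} (hk : k ∈ Set.Ioo (0 : ℝ) 1) : ∃ y κ : ℂ, y ≠ 0 ∧ ‖y‖ < 1 ∧
    (∀ j : ℕ, (Iplus k j : ℂ) = 2 * Complex.I * κ ^ (2 * j + 2) * oddMoment y (2 * j + 1)) ∧
    ∀ m : ℕ, (Iminus k m : ℂ) = 8 * κ ^ (2 * m + 4) * convMoment y (2 * m + 2) := by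
  have hk' : Real.sqrt (1 - k ^ 2) ∈ Set.Ioo (0 : ℝ) 1 := by
    have := hk.1
    have := hk.2
    constructor
    · exact Real.sqrt_pos.2 (by nlinarith)
    · rw [Real.sqrt_lt' one_pos]; nlinarith
  have ha := ellipticK_pos hk
  have hb := ellipticK_pos hk'
  unfold Iplus Iminus
  generalize ellipticK k = a at ha
  generalize ellipticK (Real.sqrt (1 - k ^ 2)) = b at hb
  obtain ⟨α, hα⟩ : ∃ α : ℂ, α = (b + a * Complex.I) / 2 := ⟨_, rfl⟩
  obtain ⟨β, hβ⟩ : ∃ β : ℂ, β = (b - a * Complex.I) / 2 := ⟨_, rfl⟩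
  have hβ0 : β ≠ 0 := by
    intro h
    have := congrArg Complex.re (hβ.symm.trans h)
    simp at this
    exact hb.ne' this
  have hσ : 0 < (α / β).im := by
    have h1 : 0 < Complex.normSq β := Complex.normSq_pos.2 hβ0
    rw [Complex.div_im, ← sub_div]
    refine div_pos ?_ h1
    simp [hα, hβ]
    nlinarith [mul_pos ha hb]
  obtain ⟨y, hy⟩ : ∃ y : ℂ, y = Complex.exp (π * Complex.I * (α / β) / 2) := ⟨_, rfl⟩
  have hy0 : y ≠ 0 := hy ▸ Complex.exp_ne_zero _
  have hy1 : ‖y‖ < 1 := by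
    rw [hy, Complex.norm_exp, Real.exp_lt_one_iff]
    have : (π * Complex.I * (α / β) / 2).re = -(π * (α / β).im / 2) := by
      rw [show π * Complex.I * (α / β) / 2 = ((π / 2 : ℝ) : ℂ) * (Complex.I * (α / β)) by
        push_cast; ring, Complex.re_ofReal_mul, Complex.I_mul_re]
      ring
    rw [this]
    have := Real.pi_pos
    linarith [mul_pos this hσ]
  refine ⟨y, -π * Complex.I / (2 * β), hy0, hy1, fun j => ?_, fun m => ?_⟩
  · have h := (hasSum_moments (-1) (Or.inr rfl) ha hb j (by norm_num) hα hβ).tsum_eq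
    push_cast at h
    rw [tsum_lattice_neg_one hβ0 hσ hy hy0 hy1 (by omega) ⟨j, rfl⟩] at h
    simp only [neg_mul, sub_neg_eq_add, one_mul, add_comm (Real.cos _)] at h ⊢
    push_cast
    rw [pow_succ (-1 : ℂ)] at h
    linear_combination -2 * h
  · have h := (hasSum_moments 1 (Or.inl rfl) ha hb (m + 1) (by norm_num) hα hβ).tsum_eq
    push_cast at h
    rw [tsum_lattice_one hβ0 hσ hy hy0 hy1 (l := 2 * (m + 1)) (by omega) (by simp)] at h
    simp only [one_mul] at h
    have h2 : (∫ x in Set.Ioi (0 : ℝ), x ^ (m + 1) / (Real.cos (a * √x) - Real.cosh (b * √x))) =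
        -∫ x in Set.Ioi (0 : ℝ), x ^ (m + 1) / (Real.cosh (b * √x) - Real.cos (a * √x)) := by
      rw [← integral_neg]
      congr 1
      funext x
      rw [← div_neg, neg_sub]
    rw [h2]
    push_cast
    rw [pow_succ (-1 : ℂ) (m + 1)] at h
    linear_combination 4 * h

lemma sum_range_two_mul (f : ℕ → ℂ) (N : ℕ) :
    ∑ i ∈ Finset.range (2 * N), f i = ∑ j ∈ Finset.range N, (f (2 * j) + f (2 * j + 1)) := by
  induction N with
  | zero => simp
  | succ N ih => rw [Finset.sum_range_succ, ← ih, mul_add, mul_one, Finset.sum_range_succ,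
      Finset.sum_range_succ, add_assoc]

theorem Iplus_Iminus_convolution_identity (k : ℝ) (hk : k ∈ Set.Ioo (0 : ℝ) 1) (n : ℕ) :
    ∑ j ∈ Finset.range (n + 1),
      ((n : ℝ) - 3 * (j : ℝ)) * (Nat.choose (2 * n + 3) (2 * j + 1) : ℝ) *
        Iplus k j * Iminus k (n - j) = 0 := by
  obtain ⟨y, κ, hy0, hy1, hP, hM⟩ := exists_moment_form hk
  have h := convMoment_identity y (2 * n + 3)
  -- Only odd indices contribute, and the top index `i = 2n + 3` pairs with `convMoment y 0 = 0`.
  have h0 : oddMoment y 0 = 0 := oddMoment_even hy0 hy1 (by simp)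
  have hconv0 : convMoment y 0 = 0 := by simp [convMoment, h0]
  rw [show 2 * n + 3 + 1 = 2 * (n + 2) by ring, sum_range_two_mul, Finset.sum_range_succ,
    show 2 * n + 3 - (2 * (n + 1) + 1) = 0 by omega, hconv0, mul_zero,
    oddMoment_even hy0 hy1 (i := 2 * (n + 1)) (by simp), mul_zero, zero_mul, add_zero, add_zero] at h
  have h2 : ((∑ j ∈ Finset.range (n + 1),
      ((n : ℝ) - 3 * (j : ℝ)) * (Nat.choose (2 * n + 3) (2 * j + 1) : ℝ) *
        Iplus k j * Iminus k (n - j) : ℝ) : ℂ) = 0 := by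
    rw [← mul_zero (8 * Complex.I * κ ^ (2 * n + 6)), ← h, Finset.mul_sum]
    push_cast
    refine Finset.sum_congr rfl fun j hj => ?_
    have hj' := Finset.mem_range_succ_iff.1 hj
    rw [hP, hM, oddMoment_even hy0 hy1 (i := 2 * j) (by simp), mul_zero, zero_mul, zero_add,
      show 2 * n + 2 - 2 * j = 2 * (n - j) + 2 by omega,
      show 2 * n + 6 = (2 * j + 2) + (2 * (n - j) + 4) by omega, pow_add]
    ring
  exact_mod_cast h2
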